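/- Let F_1, …, F_k ∈ ℝ^{n×n} be real symmetric, V ∈ ℝ^{n×p} with p ≤ n, Λ = diag(λ̂_1, …, λ̂_p) real diagonal, and assume f_j(λ̂_i) ∈ ℝ for all i, j. Let Q ∈ ℝ^{n×n} be orthogonal with V = Q [T; 0_{(n−p)×p}] (a QR factorization of V), set T̃_j = T f_j(Λ), T̃ = [T̃_1; …; T̃_k] ∈ ℝ^{kp×p}, R = Σ_{j=1}^k F_j V f_j(Λ), and partition −Q^T R = [B_1; B_2] with B_1 ∈ ℝ^{p×p} and B_2 ∈ ℝ^{(n−p)×p}. Define [A_{21}^{(1)}, …, A_{21}^{(k)}] = B_2 T̃†. Then there exist real symmetric matrices A_{11}^{(j)} = (A_{11}^{(j)})^T ∈ ℝ^{p×p} with Σ_{j=1}^k A_{11}^{(j)} T̃_j = B_1 and Σ_{j=1}^k A_{21}^{(j)} T̃_j = B_2, and the matrices δF_j := Q [[A_{11}^{(j)}, (A_{21}^{(j)})^T]; [A_{21}^{(j)}, 0_{(n−p)×(n−p)}]] Q^T are real symmetric and satisfy Σ_{j=1}^k (F_j + δF_j) V f_j(Λ) = 0. -/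

import Mathlib

open Matrix BigOperators

noncomputable section

/-- Frobenius norm of a real matrix. -/
def fnorm {ι κ : Type*} [Fintype ι] [Fintype κ] (A : Matrix ι κ ℝ) : ℝ :=
  Real.sqrt (∑ i, ∑ j, ‖A i j‖ ^ 2)

/-- The four Moore–Penrose conditions for real matrices. -/
def IsMoorePenrose {ι κ : Type*} [Fintype ι] [Fintype κ]
    (A : Matrix ι κ ℝ) (B : Matrix κ ι ℝ) : Prop :=
  A * B * A = A ∧ B * A * B = B ∧ (A * B)ᵀ = A * B ∧ (B * A)ᵀ = B * A

open scoped Classical in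
/-- The Moore–Penrose pseudoinverse (defined by choice; it always exists and is unique). -/
noncomputable def pinv {ι κ : Type*} [Fintype ι] [Fintype κ] (A : Matrix ι κ ℝ) :
    Matrix κ ι ℝ :=
  if h : ∃ B, IsMoorePenrose A B then h.choose else 0

/-!
In the coordinates given by `Q`, the matrix `V fⱼ(Λ)` becomes `[T̃ⱼ; 0]`, so the residual only sees
the first block column of `Mⱼ = Qᵀ Fⱼ Q`:
`B₁ = -∑ⱼ (Mⱼ)₁₁ T̃ⱼ` and `B₂ = -∑ⱼ (Mⱼ)₂₁ T̃ⱼ`.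
The first identity exhibits the symmetric solution `A₁₁⁽ʲ⁾ = -(Mⱼ)₁₁`. The second says that the
system `X T̃ = B₂` is consistent, so `B₂ T̃†` solves it exactly and not merely in the least-squares
sense.
-/

section MoorePenrose

variable {ι κ : Type*} [Fintype ι] [Fintype κ]

theorem isMoorePenrose_cfc_inv [DecidableEq ι] {G : Matrix ι ι ℝ} (hG : G.IsHermitian) :
    IsMoorePenrose G (cfc (fun x : ℝ ↦ x⁻¹) G) := by
  have hcont (g : ℝ → ℝ) : ContinuousOn g (spectrum ℝ G) := G.finite_real_spectrum.continuousOn g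
  have hGsa : IsSelfAdjoint G := hG
  have hmul (g : ℝ → ℝ) : G * cfc g G = cfc (fun x ↦ x * g x) G := by
    rw [cfc_mul _ _ G (hcont _) (hcont _), cfc_id' ℝ G]
  have hmul' (g : ℝ → ℝ) : cfc g G * G = cfc (fun x ↦ g x * x) G := by
    rw [cfc_mul _ _ G (hcont _) (hcont _), cfc_id' ℝ G]
  have hsymm (g : ℝ → ℝ) : (cfc g G)ᵀ = cfc g G := cfc_predicate g G
  refine ⟨?_, ?_, ?_, ?_⟩
  · rw [hmul, hmul']
    simpa only [mul_inv_mul_cancel] using cfc_id' ℝ G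
  · rw [hmul', ← cfc_mul _ _ G (hcont _) (hcont _)]
    have hinv (x : ℝ) : x⁻¹ * x * x⁻¹ = x⁻¹ := by simpa only [inv_inv] using mul_inv_mul_cancel x⁻¹
    simp only [hinv]
  · rw [hmul, hsymm]
  · rw [hmul', hsymm]

theorem IsMoorePenrose.of_transpose_mul_self {A : Matrix ι κ ℝ} {P : Matrix κ κ ℝ}
    (hP : P.IsSymm) (h : IsMoorePenrose (Aᵀ * A) P) : IsMoorePenrose A (P * Aᵀ) := by
  obtain ⟨hGPG, hPGP, -, hPG⟩ := h
  refine ⟨?_, ?_, ?_, ?_⟩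
  · -- `AᵀA` and `A` have the same kernel, so `AᵀA (P AᵀA - 1) = 0` gives `A (P AᵀA - 1) = 0`.
    classical
    have hker : A * (P * (Aᵀ * A) - 1) = 0 := by
      rw [← conjTranspose_mul_self_mul_eq_zero, conjTranspose_eq_transpose_of_trivial,
        Matrix.mul_sub, Matrix.mul_one, ← Matrix.mul_assoc, hGPG, sub_self]
    rw [Matrix.mul_sub, Matrix.mul_one, sub_eq_zero] at hker
    simpa only [Matrix.mul_assoc] using hker
  · simpa only [Matrix.mul_assoc] using congrArg (· * Aᵀ) hPGP
  · simp only [transpose_mul, transpose_transpose, hP.eq, Matrix.mul_assoc]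
  · rwa [Matrix.mul_assoc]

theorem exists_isMoorePenrose (A : Matrix ι κ ℝ) : ∃ B, IsMoorePenrose A B := by
  classical
  have hG : (Aᵀ * A).IsHermitian := isHermitian_conjTranspose_mul_self A
  have hP : (cfc (fun x : ℝ ↦ x⁻¹) (Aᵀ * A)).IsSymm := cfc_predicate _ (Aᵀ * A)
  exact ⟨_, (isMoorePenrose_cfc_inv hG).of_transpose_mul_self hP⟩

theorem isMoorePenrose_pinv (A : Matrix ι κ ℝ) : IsMoorePenrose A (pinv A) := by
  have h := exists_isMoorePenrose A
  rw [pinv, dif_pos h]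
  exact h.choose_spec

end MoorePenrose

section BlockMatrices

variable {ι κ l m r s K : Type*}

/-- The block row `[A₁, …, A_k]`. Its columns are indexed by pairs (block, column within block). -/
def blockRow (A : κ → Matrix l m K) : Matrix l (κ × m) K :=
  of fun i x ↦ A x.1 i x.2

/-- The block column `[S₁; …; S_k]`, which is the paper's `T̃` when `Sⱼ = T̃ⱼ`. Its rows are
indexed by pairs (block, row within block). -/
def blockCol (S : κ → Matrix m s K) : Matrix (κ × m) s K :=
  of fun x t ↦ S x.1 x.2 t

theorem blockRow_mul_blockCol [Fintype κ] [Fintype m] [NonUnitalNonAssocSemiring K]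
    (A : κ → Matrix l m K) (S : κ → Matrix m s K) :
    blockRow A * blockCol S = ∑ j, A j * S j := by
  ext i t
  simp only [blockRow, blockCol, mul_apply, of_apply, Fintype.sum_prod_type, Matrix.sum_apply]

theorem fromRows_sum [AddCommMonoid K] (J : Finset κ) (A : κ → Matrix l s K)
    (B : κ → Matrix m s K) :
    fromRows (∑ j ∈ J, A j) (∑ j ∈ J, B j) = ∑ j ∈ J, fromRows (A j) (B j) := by
  ext (i | i) t <;> simp only [fromRows_apply_inl, fromRows_apply_inr, Matrix.sum_apply]

theorem mul_fromRows_zero [Fintype m] [Fintype l] [Semiring K]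
    (M : Matrix (r ⊕ ι) (m ⊕ l) K) (S : Matrix m s K) :
    M * fromRows S (0 : Matrix l s K) = fromRows (M.toBlocks₁₁ * S) (M.toBlocks₂₁ * S) := by
  conv_lhs => rw [← fromBlocks_toBlocks M, fromBlocks_mul_fromRows]
  simp only [Matrix.mul_zero, add_zero]

theorem isSymm_transpose_mul_mul [Fintype m] [NonUnitalCommSemiring K] {M : Matrix m m K}
    (hM : M.IsSymm) (Q : Matrix m r K) : (Qᵀ * M * Q).IsSymm := by
  simp only [IsSymm, transpose_mul, transpose_transpose, hM.eq, Matrix.mul_assoc]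

theorem mul_weakInverse_mul_cancel [Fintype m] [Fintype s] [NonUnitalSemiring K]
    {S : Matrix m s K} {G : Matrix s m K} (hG : S * G * S = S) (C : Matrix l m K) :
    C * S * G * S = C * S := by
  simpa only [Matrix.mul_assoc] using congrArg (C * ·) hG

end BlockMatrices

section BackwardError

variable {κ l m r s K : Type*} [Fintype κ] [Fintype l] [Fintype m] [CommRing K]

theorem transpose_mul_sum_mul_fromRows_zero (F : κ → Matrix (m ⊕ l) (m ⊕ l) K)
    (Q : Matrix (m ⊕ l) (m ⊕ l) K) (S : κ → Matrix m s K) :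
    Qᵀ * ∑ j, F j * (Q * fromRows (S j) (0 : Matrix l s K)) =
      fromRows (∑ j, (Qᵀ * F j * Q).toBlocks₁₁ * S j) (∑ j, (Qᵀ * F j * Q).toBlocks₂₁ * S j) := by
  simp only [fromRows_sum, ← mul_fromRows_zero, Matrix.mul_sum, Matrix.mul_assoc]

variable [DecidableEq l] [DecidableEq m] {Q : Matrix (m ⊕ l) (m ⊕ l) K}

theorem sum_conj_fromBlocks_mul_fromRows_zero (hQ : Qᵀ * Q = 1)
    (A₁₁ : κ → Matrix m m K) (A₁₂ : κ → Matrix m l K) (A₂₁ : κ → Matrix l m K)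
    (A₂₂ : κ → Matrix l l K) (S : κ → Matrix m s K) :
    ∑ j, Q * fromBlocks (A₁₁ j) (A₁₂ j) (A₂₁ j) (A₂₂ j) * Qᵀ *
        (Q * fromRows (S j) (0 : Matrix l s K)) =
      Q * fromRows (∑ j, A₁₁ j * S j) (∑ j, A₂₁ j * S j) := by
  have hcancel (X : Matrix (m ⊕ l) s K) : Qᵀ * (Q * X) = X := by
    rw [← Matrix.mul_assoc, hQ, Matrix.one_mul]
  simp only [Matrix.mul_assoc, hcancel, fromBlocks_mul_fromRows, Matrix.mul_zero, add_zero,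
    fromRows_sum, Matrix.mul_sum]

/-- The arbitrary matrices `D j` take the place of `fⱼ(Λ)`, and any `G` with `T̃ G T̃ = T̃` takes
the place of the pseudoinverse `T̃†`. -/
theorem symmetric_backward_error_exists_general [Fintype r] [Fintype s]
    (F : κ → Matrix (m ⊕ l) (m ⊕ l) K) (hF : ∀ j, (F j).IsSymm) (D : κ → Matrix r s K)
    (V : Matrix (m ⊕ l) r K) (hQ : Qᵀ * Q = 1) (T : Matrix m r K)
    (hV : V = Q * fromRows T (0 : Matrix l r K))
    (S : κ → Matrix m s K) (hS : ∀ j, S j = T * D j)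
    (G : Matrix s (κ × m) K) (hG : blockCol S * G * blockCol S = blockCol S)
    (R : Matrix (m ⊕ l) s K) (hR : R = ∑ j, F j * V * D j)
    (B₁ : Matrix m s K) (B₂ : Matrix l s K) (hB : fromRows B₁ B₂ = -(Qᵀ * R))
    (A₂₁ : κ → Matrix l m K) (hA₂₁ : blockRow A₂₁ = B₂ * G) :
    ∃ A₁₁ : κ → Matrix m m K,
      (∀ j, (A₁₁ j).IsSymm) ∧
      ∑ j, A₁₁ j * S j = B₁ ∧
      ∑ j, A₂₁ j * S j = B₂ ∧
      (∀ j, (Q * fromBlocks (A₁₁ j) (A₂₁ j)ᵀ (A₂₁ j) 0 * Qᵀ).IsSymm) ∧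
      ∑ j, (F j + Q * fromBlocks (A₁₁ j) (A₂₁ j)ᵀ (A₂₁ j) 0 * Qᵀ) * V * D j = 0 := by
  let M j := Qᵀ * F j * Q
  have hVD j : V * D j = Q * fromRows (S j) (0 : Matrix l s K) := by
    rw [hV, hS, Matrix.mul_assoc, fromRows_mul, Matrix.zero_mul]
  obtain ⟨hB₁, hB₂⟩ :
      B₁ = ∑ j, -(M j).toBlocks₁₁ * S j ∧ B₂ = ∑ j, -(M j).toBlocks₂₁ * S j := by
    simp only [Matrix.mul_assoc, hVD] at hR
    rw [hR, transpose_mul_sum_mul_fromRows_zero, fromRows_neg] at hB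
    simpa only [Matrix.neg_mul, Finset.sum_neg_distrib] using fromRows_inj hB
  have hA₁₁ j : (-(M j).toBlocks₁₁).IsSymm :=
    ((isSymm_transpose_mul_mul (hF j) Q).submatrix Sum.inl).neg
  have hA₂₁S : ∑ j, A₂₁ j * S j = B₂ := by
    rw [← blockRow_mul_blockCol] at hB₂ ⊢
    rw [hA₂₁, hB₂, mul_weakInverse_mul_cancel hG]
  refine ⟨fun j ↦ -(M j).toBlocks₁₁, hA₁₁, hB₁.symm, hA₂₁S, fun j ↦ ?_, ?_⟩
  · simpa only [transpose_transpose] using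
      isSymm_transpose_mul_mul ((hA₁₁ j).fromBlocks (transpose_transpose _) isSymm_zero) Qᵀ
  · calc
      _ = R + Q * fromRows B₁ B₂ := by
        simp only [Matrix.add_mul, Finset.sum_add_distrib, ← hR]
        simp only [Matrix.mul_assoc _ V, hVD]
        rw [sum_conj_fromBlocks_mul_fromRows_zero hQ, ← hB₁, hA₂₁S]
      _ = 0 := by
        rw [hB, Matrix.mul_neg, ← Matrix.mul_assoc, mul_eq_one_comm.mp hQ, Matrix.one_mul,
          add_neg_cancel]

end BackwardError

/-- Symmetric backward errors (existence of the structured minimum-norm perturbation):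
with real symmetric coefficients `Fⱼ`, a QR factorization `V = Q [T; 0]` (the ambient
dimension `n = p + q` is encoded as `Fin p ⊕ Fin q`), `T̃ⱼ = T fⱼ(Λ)`,
`[B₁; B₂] = -Qᵀ R` and `[A₂₁⁽¹⁾, …, A₂₁⁽ᵏ⁾] = B₂ T̃†`, there exist symmetric matrices
`A₁₁⁽ʲ⁾` solving `∑ⱼ A₁₁⁽ʲ⁾ T̃ⱼ = B₁` (and `∑ⱼ A₂₁⁽ʲ⁾ T̃ⱼ = B₂` holds), such that the
matrices `δFⱼ = Q [[A₁₁⁽ʲ⁾, (A₂₁⁽ʲ⁾)ᵀ]; [A₂₁⁽ʲ⁾, 0]] Qᵀ` are real symmetric and satisfy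
`∑ⱼ (Fⱼ + δFⱼ) V fⱼ(Λ) = 0`. -/
theorem symmetric_backward_error_exists (p q k : ℕ)
    (F : Fin k → Matrix (Fin p ⊕ Fin q) (Fin p ⊕ Fin q) ℝ)
    (hFsym : ∀ j, (F j)ᵀ = F j)
    (f : Fin k → ℝ → ℝ) (lam : Fin p → ℝ)
    (V : Matrix (Fin p ⊕ Fin q) (Fin p) ℝ)
    (Q : Matrix (Fin p ⊕ Fin q) (Fin p ⊕ Fin q) ℝ) (hQ : Qᵀ * Q = 1)
    (T : Matrix (Fin p) (Fin p) ℝ)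
    (hV : V = Q * Matrix.fromRows T 0)
    (Tt : Fin k → Matrix (Fin p) (Fin p) ℝ)
    (hTt : ∀ j, Tt j = T * Matrix.diagonal fun i => f j (lam i))
    (Ttil : Matrix (Fin k × Fin p) (Fin p) ℝ)
    (hTtil : ∀ j s t, Ttil (j, s) t = Tt j s t)
    (R : Matrix (Fin p ⊕ Fin q) (Fin p) ℝ)
    (hR : R = ∑ j, F j * V * Matrix.diagonal fun i => f j (lam i))
    (B1 : Matrix (Fin p) (Fin p) ℝ) (hB1 : ∀ s t, B1 s t = -((Qᵀ * R) (Sum.inl s) t))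
    (B2 : Matrix (Fin q) (Fin p) ℝ) (hB2 : ∀ m t, B2 m t = -((Qᵀ * R) (Sum.inr m) t))
    (A21 : Fin k → Matrix (Fin q) (Fin p) ℝ)
    (hA21 : ∀ j m s, A21 j m s = (B2 * pinv Ttil) m (j, s)) :
    ∃ A11 : Fin k → Matrix (Fin p) (Fin p) ℝ,
      (∀ j, (A11 j)ᵀ = A11 j) ∧
      (∑ j, A11 j * Tt j) = B1 ∧
      (∑ j, A21 j * Tt j) = B2 ∧
      (∀ j, (Q * Matrix.fromBlocks (A11 j) (A21 j)ᵀ (A21 j) 0 * Qᵀ)ᵀ =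
        Q * Matrix.fromBlocks (A11 j) (A21 j)ᵀ (A21 j) 0 * Qᵀ) ∧
      (∑ j, (F j + Q * Matrix.fromBlocks (A11 j) (A21 j)ᵀ (A21 j) 0 * Qᵀ) * V *
        Matrix.diagonal fun i => f j (lam i)) = 0 := by
  obtain rfl : Ttil = blockCol Tt := Matrix.ext fun x ↦ hTtil x.1 x.2
  exact symmetric_backward_error_exists_general F hFsym _ V hQ T hV Tt hTt (pinv (blockCol Tt))
    (isMoorePenrose_pinv _).1 R hR B1 B2 (Matrix.ext (Sum.rec hB1 hB2)) A21
    (Matrix.ext fun i x ↦ hA21 x.1 i x.2)
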